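/- There exists a real number a ∈ (0, 1/7) such that the iterated function system 𝒮₁(a) = {x/7, x/7 + a, x/7 + 6/7} on ℝ satisfies the weak separation property, does not satisfy the convex finite type condition, and its attractor K satisfies 0 < dim_H(K) < 1, where dim_H denotes Hausdorff dimension. -/

import Mathlib

open Set

/-- The IFS 𝒮₁(a) = {x/7, x/7 + a, x/7 + 6/7} on ℝ. -/
noncomputable def S1 (a : ℝ) : Fin 3 → ℝ → ℝ :=
  ![fun x => x / 7, fun x => x / 7 + a, fun x => x / 7 + 6 / 7]

/-- For a word σ = (s₁,…,s_k), the composition S_σ = S_{s₁} ∘ ⋯ ∘ S_{s_k}. -/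
noncomputable def Sw1 (a : ℝ) : List (Fin 3) → ℝ → ℝ
  | [] => id
  | i :: σ => S1 a i ∘ Sw1 a σ

/-- For words σ, τ of the same length k, S_σ⁻¹ ∘ S_τ is the translation by
`amt1 a σ τ = 7 ^ k * (S_τ(0) − S_σ(0))`. -/
noncomputable def amt1 (a : ℝ) (σ τ : List (Fin 3)) : ℝ :=
  7 ^ σ.length * (Sw1 a τ 0 - Sw1 a σ 0)

/-- The weak separation property for 𝒮₁(a): the nonzero translation amounts
`a_{σ,τ}` over pairs of words of equal length are bounded away from 0. -/
def WSP1 (a : ℝ) : Prop :=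
  ∃ ε > 0, ∀ σ τ : List (Fin 3), σ.length = τ.length →
    amt1 a σ τ ≠ 0 → ε ≤ |amt1 a σ τ|

/-- The neighbourhood type of a word σ relative to the open interval (0,1). -/
noncomputable def Ntype1 (a : ℝ) (σ : List (Fin 3)) : Set ℝ :=
  { t | ∃ τ : List (Fin 3), τ.length = σ.length ∧
      (Sw1 a σ '' Ioo 0 1 ∩ Sw1 a τ '' Ioo 0 1).Nonempty ∧ t = amt1 a σ τ }

/-- The convex finite type condition: only finitely many neighbourhood types
relative to (0,1). -/
def FTCco1 (a : ℝ) : Prop := (Set.range (Ntype1 a)).Finite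

/-- The digits of the system. -/
noncomputable def dg (a : ℝ) : Fin 3 → ℝ := ![0, a, 6 / 7]

lemma S1_eq (a : ℝ) (i : Fin 3) (x : ℝ) : S1 a i x = x / 7 + dg a i := by
  fin_cases i <;> simp [S1, dg]

lemma Sw1_eq (a : ℝ) (σ : List (Fin 3)) (x : ℝ) :
    Sw1 a σ x = Sw1 a σ 0 + x / 7 ^ σ.length := by
  induction σ generalizing x with
  | nil => simp [Sw1]
  | cons i σ ih =>
    simp only [Sw1, Function.comp, S1_eq, List.length_cons]
    rw [ih x]
    field_simp
    ring

lemma Sw1_append (a : ℝ) (σ : List (Fin 3)) (i : Fin 3) :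
    Sw1 a (σ ++ [i]) 0 = Sw1 a σ 0 + dg a i / 7 ^ σ.length := by
  have h : ∀ x, Sw1 a (σ ++ [i]) x = Sw1 a σ (S1 a i x) := by
    intro x
    induction σ with
    | nil => simp [Sw1]
    | cons j σ ih => simp [Sw1, ih]
  rw [h, Sw1_eq, S1_eq]; simp

/-- Reachable translation amounts. -/
def Rch (a t : ℝ) : Prop :=
  ∃ σ τ : List (Fin 3), σ.length = τ.length ∧ amt1 a σ τ = t

lemma Rch_zero (a : ℝ) : Rch a 0 := ⟨[], [], rfl, by simp [amt1]⟩

lemma Rch_neg {a t : ℝ} (h : Rch a t) : Rch a (-t) := by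
  obtain ⟨σ, τ, hl, h⟩ := h
  refine ⟨τ, σ, hl.symm, ?_⟩
  rw [← h]; simp only [amt1, hl]; ring

lemma Rch_step {a t : ℝ} (h : Rch a t) (i j : Fin 3) :
    Rch a (7 * t + 7 * (dg a j - dg a i)) := by
  obtain ⟨σ, τ, hl, h⟩ := h
  refine ⟨σ ++ [i], τ ++ [j], by simp [hl], ?_⟩
  rw [← h]; simp only [amt1, Sw1_append, hl, List.length_append, List.length_singleton]
  field_simp
  ring

lemma inv_amt {a : ℝ} {G : Set ℝ}
    (hG : ∀ t ∈ G, ∀ i j, 7 * t + 7 * (dg a j - dg a i) ∈ G) :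
    ∀ σ τ : List (Fin 3), σ.length = τ.length → ∀ t ∈ G, 7 ^ σ.length * t + amt1 a σ τ ∈ G := by
  intro σ
  induction σ with
  | nil =>
    intro τ hl t ht
    have : τ = [] := by simpa using hl.symm
    subst this
    simpa [amt1] using ht
  | cons i σ ih =>
    intro τ hl t ht
    cases τ with
    | nil => simp at hl
    | cons j τ =>
      have hl' : σ.length = τ.length := by simpa using hl
      have := ih τ hl' _ (hG t ht i j)
      convert this using 1
      simp only [amt1, Sw1, Function.comp, S1_eq, List.length_cons]
      ring

lemma not_ftc {a : ℝ} (v : ℕ → ℝ) (hv : StrictAnti v) (h0 : ∀ k, 0 < v k) (h1 : ∀ k, v k < 1)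
    (hR : ∀ k, Rch a (1 - v k)) : ¬ FTCco1 a := by
  intro hf
  have hU : (⋃₀ (Set.range (Ntype1 a))).Finite := by
    refine hf.sUnion ?_
    rintro _ ⟨σ, rfl⟩
    refine ((List.finite_length_eq (Fin 3) σ.length).image (fun τ => amt1 a σ τ)).subset ?_
    rintro t ⟨τ, hl, -, rfl⟩
    exact ⟨τ, hl, rfl⟩
  refine Set.infinite_range_of_injective (f := fun k => 1 - v k) ?_ (hU.subset ?_)
  · intro k l h
    exact hv.injective (by simpa using h)
  · rintro _ ⟨k, rfl⟩
    obtain ⟨σ, τ, hl, h⟩ := hR k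
    refine ⟨Ntype1 a σ, ⟨σ, rfl⟩, τ, hl.symm, ?_, h.symm⟩
    have := h0 k
    have := h1 k
    refine ⟨Sw1 a τ (v k / 2), ⟨v k / 2 + (1 - v k), ⟨by linarith, by linarith⟩, ?_⟩,
      ⟨v k / 2, ⟨by linarith, by linarith⟩, rfl⟩⟩
    rw [Sw1_eq a τ, Sw1_eq a σ, ← h, amt1, ← hl]
    field_simp
    ring

/-- Terms of the alternating series. -/
noncomputable def pp : ℕ → ℕ → ℝ
  | 0, k => (1 / 7) ^ (k + 5)
  | j + 1, k => -(1 / 7) ^ (k + 5) * pp j (k + 1)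

lemma pp_bound (j k : ℕ) : |pp j k| ≤ (1 / 7) * (1 / 7) ^ j := by
  have hq : ∀ k : ℕ, ((1:ℝ) / 7) ^ (k + 5) ≤ 1 / 7 := fun k => by
    calc ((1:ℝ) / 7) ^ (k + 5) ≤ (1 / 7) ^ 1 :=
          pow_le_pow_of_le_one (by norm_num) (by norm_num) (by omega)
      _ = 1 / 7 := pow_one _
  induction j generalizing k with
  | zero => simpa [pp, abs_of_nonneg] using hq k
  | succ j ih =>
    rw [pp, abs_mul, abs_neg, abs_of_nonneg (by positivity), pow_succ (1 / 7 : ℝ) j]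
    have := mul_le_mul (hq k) (ih (k + 1)) (abs_nonneg _) (by norm_num)
    linarith

lemma exists_r : ∃ r : ℕ → ℝ, ∀ k, |r k| ≤ 1 / 6 ∧ r k = (1 / 7) ^ (k + 5) * (1 - r (k + 1)) := by
  have hg : HasSum (fun j : ℕ => (1 / 7 : ℝ) * (1 / 7) ^ j) (1 / 6) := by
    have := (hasSum_geometric_of_lt_one (r := (1 / 7 : ℝ)) (by norm_num) (by norm_num)).mul_left
      (1 / 7)
    have e : (1 / 6 : ℝ) = 1 / 7 * (1 - 1 / 7)⁻¹ := by norm_num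
    rw [e]; exact this
  have hs : ∀ k, Summable (fun j => pp j k) := fun k =>
    Summable.of_norm_bounded hg.summable (fun j => pp_bound j k)
  refine ⟨fun k => ∑' j, pp j k, fun k => ⟨?_, ?_⟩⟩
  · exact tsum_of_norm_bounded (f := fun j => pp j k) hg (fun j => pp_bound j k)
  · show ∑' j, pp j k = _
    rw [(hs k).tsum_eq_zero_add]
    simp only [pp, tsum_mul_left]
    ring

lemma exists_v : ∃ (δ : ℝ) (v : ℕ → ℝ), v 0 = δ ∧ StrictAnti v ∧ (∀ k, 0 < v k) ∧
    (∀ k, v k < 1 / 1000) ∧ ∀ k, 7 ^ (k + 5) * v k = 10 - 8 * δ - v (k + 1) := by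
  obtain ⟨r, hr⟩ := exists_r
  have hq : ∀ k : ℕ, (0:ℝ) < (1 / 7) ^ (k + 5) := fun k => by positivity
  have hq1 : ∀ k : ℕ, ((1:ℝ) / 7) ^ (k + 5) ≤ (1 / 7) ^ 5 := fun k =>
    pow_le_pow_of_le_one (by norm_num) (by norm_num) (by omega)
  have hlo : ∀ k, (1 / 7) ^ (k + 5) * (5 / 6) ≤ r k := fun k => by
    rw [(hr k).2]
    have := (abs_le.1 (hr (k + 1)).1).2
    exact mul_le_mul_of_nonneg_left (by linarith) (hq k).le
  have hhi : ∀ k, r k ≤ (1 / 7) ^ (k + 5) * (7 / 6) := fun k => by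
    rw [(hr k).2]
    have := (abs_le.1 (hr (k + 1)).1).1
    exact mul_le_mul_of_nonneg_left (by linarith) (hq k).le
  have hr0 : ∀ k, 0 < r k := fun k => lt_of_lt_of_le (by have := hq k; positivity) (hlo k)
  have h0 := hr0 0
  have hc : 10 - 8 * (10 * r 0 / (1 + 8 * r 0)) = 10 / (1 + 8 * r 0) := by
    field_simp; ring
  have hcp : 0 < 10 / (1 + 8 * r 0) := by positivity
  have hcl : 10 / (1 + 8 * r 0) ≤ 10 := by
    rw [div_le_iff₀ (by positivity)]; linarith
  refine ⟨10 * r 0 / (1 + 8 * r 0), fun k => 10 / (1 + 8 * r 0) * r k, by ring, ?_, ?_, ?_, ?_⟩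
  · refine strictAnti_nat_of_succ_lt fun k => mul_lt_mul_of_pos_left ?_ hcp
    have h1 := hhi (k + 1)
    have h2 := hlo k
    have h3 := hq k
    have : ((1:ℝ) / 7) ^ (k + 1 + 5) = (1 / 7) ^ (k + 5) * (1 / 7) := by ring
    rw [this] at h1
    linarith
  · intro k; exact mul_pos hcp (hr0 k)
  · intro k
    have : 10 / (1 + 8 * r 0) * r k ≤ 10 * ((1 / 7) ^ 5 * (7 / 6)) :=
      mul_le_mul hcl (by linarith [hhi k, hq1 k]) (hr0 k).le (by norm_num)
    refine lt_of_le_of_lt this (by norm_num)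
  · intro k
    have h7 : (7:ℝ) ^ (k + 5) * (1 / 7) ^ (k + 5) = 1 := by rw [← mul_pow]; norm_num
    rw [hc]
    have := (hr k).2
    calc (7:ℝ) ^ (k + 5) * (10 / (1 + 8 * r 0) * r k)
        = 10 / (1 + 8 * r 0) * (7 ^ (k + 5) * r k) := by ring
      _ = 10 / (1 + 8 * r 0) * (1 - r (k + 1)) := by
        rw [this, ← mul_assoc (7 ^ (k + 5)), h7, one_mul]
      _ = _ := by ring

/-- The invariant set of translation amounts (up to sign). -/
def Y (v : ℕ → ℝ) : Set ℝ :=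
  {y | y = 0 ∨ 1 ≤ y ∨ (3 / 10 ≤ y ∧ y ≤ 1 / 2) ∨
    (∃ k j, j ≤ k + 3 ∧ y = 1 - 7 ^ j * v k) ∨ ∃ k, y = (4 + v 0 + v (k + 1)) / 7}

lemma Y_step {v : ℕ → ℝ} (h0 : ∀ k, 0 < v k) (h1 : ∀ k, v k < 1 / 1000)
    (hv : ∀ k, 7 ^ (k + 5) * v k = 10 - 8 * v 0 - v (k + 1)) :
    ∀ t : ℝ, |t| ∈ Y v → ∀ e : ℝ, (|e| = 0 ∨ |e| = 1 - v 0 ∨ |e| = 6 ∨ |e| = 5 + v 0) →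
      |7 * t + e| ∈ Y v := by
  intro t
  wlog ht : 0 ≤ t generalizing t
  · intro h e he
    have := this (-t) (by linarith) (by rwa [abs_neg]) (-e) (by rwa [abs_neg])
    rw [← abs_neg]
    convert this using 2
    ring
  rw [abs_of_nonneg ht]
  have hd := h0 0
  have hd1 := h1 0
  intro h e he
  have hee : e = 0 ∨ e = 1 - v 0 ∨ e = -(1 - v 0) ∨ e = 6 ∨ e = -6 ∨ e = 5 + v 0 ∨
      e = -(5 + v 0) := by
    rcases he with he | he | he | he
    · exact Or.inl (abs_eq_zero.1 he)
    all_goals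
      rcases eq_or_eq_neg_of_abs_eq he with h | h <;> simp [h]
  have big : 1 ≤ 7 * t + e ∨ 7 * t + e ≤ -1 → |7 * t + e| ∈ Y v := by
    intro h
    exact Or.inr (Or.inl (le_abs'.2 h.symm))
  rcases h with h | h | h | ⟨k, j, hj, h⟩ | ⟨k, h⟩
  · subst h
    rw [mul_zero, zero_add]
    rcases he with he | he | he | he
    · exact Or.inl he
    · exact Or.inr (Or.inr (Or.inr (Or.inl ⟨0, 0, by omega, by rw [he]; ring⟩)))
    · exact Or.inr (Or.inl (by rw [he]; norm_num))
    · exact Or.inr (Or.inl (by rw [he]; linarith))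
  · apply big; left
    rcases hee with h | h | h | h | h | h | h <;> linarith
  · apply big
    obtain ⟨ha, hb⟩ := h
    rcases hee with h | h | h | h | h | h | h
    on_goal 5 => right; linarith
    on_goal 6 => right; linarith
    all_goals left; linarith
  · have hk := hv k
    have hk0 := h0 k
    have hk1 := h0 (k + 1)
    have hk2 := h1 (k + 1)
    rcases Nat.lt_or_ge j (k + 3) with hlt | hge
    · have hu : 7 ^ j * v k * 7 ≤ 10 / 49 := by
        have : (7:ℝ) ^ (j + 1) ≤ 7 ^ (k + 3) := pow_le_pow_right₀ (by norm_num) (by omega)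
        have h3 := mul_le_mul_of_nonneg_right this hk0.le
        have e1 : (7:ℝ) ^ (k + 5) * v k = 49 * (7 ^ (k + 3) * v k) := by ring
        have e2 : (7:ℝ) ^ (j + 1) * v k = 7 ^ j * v k * 7 := by ring
        linarith
      have hp : 0 < 7 ^ j * v k := by positivity
      have main : |7 * t + -6| ∈ Y v := by
        refine Or.inr (Or.inr (Or.inr (Or.inl ⟨k, j + 1, by omega, ?_⟩)))
        rw [abs_of_nonneg (by linarith), h]; ring
      rcases hee with h | h | h | h | h | h | h
      on_goal 5 => rw [h]; exact main
      all_goals apply big; left; linarith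
    · have hjk : j = k + 3 := by omega
      subst hjk
      have e1 : (7:ℝ) ^ (k + 5) * v k = 49 * (7 ^ (k + 3) * v k) := by ring
      rcases hee with h | h | h | h | h | h | h
      on_goal 5 =>
        refine Or.inr (Or.inr (Or.inl ?_))
        rw [abs_of_nonpos (by linarith)]
        constructor <;> linarith
      on_goal 6 =>
        refine Or.inr (Or.inr (Or.inr (Or.inr ⟨k, ?_⟩)))
        rw [abs_of_nonneg (by linarith)]
        linarith
      all_goals apply big; left; linarith
  · have hk1 := h0 (k + 1)
    have hk2 := h1 (k + 1)
    rcases hee with h | h | h | h | h | h | h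
    on_goal 5 => apply big; right; linarith
    on_goal 6 =>
      refine Or.inr (Or.inr (Or.inr (Or.inl ⟨k + 1, 0, by omega, ?_⟩)))
      rw [abs_of_nonpos (by linarith)]
      linarith
    all_goals apply big; left; linarith

lemma Y_low {v : ℕ → ℝ} (h0 : ∀ k, 0 < v k) (h1 : ∀ k, v k < 1 / 1000)
    (hv : ∀ k, 7 ^ (k + 5) * v k = 10 - 8 * v 0 - v (k + 1)) :
    ∀ y ∈ Y v, y ≠ 0 → 3 / 10 ≤ y := by
  intro y h hy
  have hd := h0 0
  rcases h with h | h | h | ⟨k, j, hj, h⟩ | ⟨k, h⟩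
  · exact absurd h hy
  · linarith
  · exact h.1
  · have hk := hv k
    have hk1 := h0 (k + 1)
    have hk0 := h0 k
    have : (7:ℝ) ^ j ≤ 7 ^ (k + 3) := pow_le_pow_right₀ (by norm_num) hj
    have h3 := mul_le_mul_of_nonneg_right this hk0.le
    have e1 : (7:ℝ) ^ (k + 5) * v k = 49 * (7 ^ (k + 3) * v k) := by ring
    linarith
  · have hk1 := h0 (k + 1)
    linarith

lemma wsp_of {v : ℕ → ℝ} (h0 : ∀ k, 0 < v k) (h1 : ∀ k, v k < 1 / 1000)
    (hv : ∀ k, 7 ^ (k + 5) * v k = 10 - 8 * v 0 - v (k + 1)) : WSP1 ((1 - v 0) / 7) := by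
  refine ⟨3 / 10, by norm_num, fun σ τ hl hne => ?_⟩
  have hd := h0 0
  have hd1 := h1 0
  have key := inv_amt (a := (1 - v 0) / 7) (G := {t | |t| ∈ Y v}) (fun t ht i j => by
    refine Y_step h0 h1 hv t ht _ ?_
    have b1 : |(1 - v 0) / 7| = (1 - v 0) / 7 := abs_of_nonneg (by linarith)
    have b2 : |6 / 7 - (1 - v 0) / 7| = (5 + v 0) / 7 := by
      rw [abs_of_nonneg (by linarith)]; ring
    have b3 : |(1 - v 0) / 7 - 6 / 7| = (5 + v 0) / 7 := by
      rw [abs_sub_comm, b2]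
    fin_cases i <;> fin_cases j <;> simp only [dg] <;> norm_num
    · right; left; linarith
    · right; left; linarith
    · right; right; right; linarith
    · right; right; right; linarith)
    σ τ hl 0 (by simp [Y])
  rw [mul_zero, zero_add] at key
  exact Y_low h0 h1 hv _ key (by simpa using hne)

lemma reach {v : ℕ → ℝ}
    (hv : ∀ k, 7 ^ (k + 5) * v k = 10 - 8 * v 0 - v (k + 1)) (k : ℕ) :
    Rch ((1 - v 0) / 7) (1 - v k) := by
  induction k with
  | zero =>
    have := Rch_step (Rch_zero ((1 - v 0) / 7)) 0 1
    convert this using 1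
    simp [dg]; ring
  | succ k ih =>
    have hj : ∀ j, Rch ((1 - v 0) / 7) (1 - 7 ^ j * v k) := by
      intro j
      induction j with
      | zero => simpa using ih
      | succ j ihj =>
        have := Rch_step ihj 2 0
        convert this using 1
        simp [dg]; ring
    have := Rch_neg (Rch_step (Rch_step (hj (k + 3)) 2 1) 2 1)
    convert this using 1
    have := hv k
    have e1 : (7:ℝ) ^ (k + 5) * v k = 49 * (7 ^ (k + 3) * v k) := by ring
    simp [dg]
    linarith

lemma cover {a : ℝ} {K : Set ℝ} (hK : K = ⋃ i, S1 a i '' K) (n : ℕ) :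
    ∀ x ∈ K, ∃ w : Fin n → Fin 3, x ∈ Sw1 a (List.ofFn w) '' K := by
  induction n with
  | zero => intro x hx; exact ⟨Fin.elim0, x, hx, by simp [Sw1]⟩
  | succ n ih =>
    intro x hx
    rw [hK] at hx
    obtain ⟨i, y, hy, rfl⟩ := mem_iUnion.1 hx
    obtain ⟨w, z, hz, rfl⟩ := ih y hy
    refine ⟨Fin.cons i w, z, hz, ?_⟩
    simp [List.ofFn_succ, Sw1]

open Filter Topology MeasureTheory ENNReal in
lemma dim_upper {a : ℝ} {K : Set ℝ} (hc : IsCompact K) (hK : K = ⋃ i, S1 a i '' K) :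
    dimH K < 1 := by
  have hD : Metric.ediam K ≠ ∞ := hc.isBounded.ediam_ne_top
  have hdi : ∀ (n : ℕ) (w : Fin n → Fin 3),
      Metric.ediam (Sw1 a (List.ofFn w) '' K) ≤ (7⁻¹ : ℝ≥0∞) ^ n * Metric.ediam K := by
    intro n w
    have hL : LipschitzWith ((7⁻¹ : NNReal) ^ n) (Sw1 a (List.ofFn w)) := by
      refine LipschitzWith.of_dist_le_mul fun x y => ?_
      rw [Sw1_eq a _ x, Sw1_eq a _ y, Real.dist_eq, Real.dist_eq]
      have : Sw1 a (List.ofFn w) 0 + x / 7 ^ (List.ofFn w).length -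
        (Sw1 a (List.ofFn w) 0 + y / 7 ^ (List.ofFn w).length) = (7⁻¹) ^ n * (x - y) := by
        simp only [List.length_ofFn, inv_pow]; ring
      rw [this, abs_mul, abs_of_nonneg (by positivity)]
      simp
    have := hL.ediam_image_le K
    simpa [ENNReal.inv_pow] using this
  have h3 : (3 : ℝ≥0∞) * (7⁻¹ : ℝ≥0∞) ^ (2 / 3 : ℝ) ≤ 1 := by
    have : (3 : ℝ≥0∞) ≤ 7 ^ (2 / 3 : ℝ) := by
      have e1 : (3 : ℝ≥0∞) = (3 ^ (3:ℝ)) ^ (1 / 3 : ℝ) := by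
        rw [← ENNReal.rpow_mul]; norm_num
      have e2 : (7 : ℝ≥0∞) ^ (2 / 3 : ℝ) = (7 ^ (2:ℝ)) ^ (1 / 3 : ℝ) := by
        rw [← ENNReal.rpow_mul]; norm_num
      rw [e2]; nth_rewrite 1 [e1]
      refine ENNReal.rpow_le_rpow ?_ (by norm_num)
      have h3 : (3:ℝ≥0∞) ^ (3:ℝ) = 3 ^ 3 := by exact_mod_cast ENNReal.rpow_natCast 3 3
      have h7 : (7:ℝ≥0∞) ^ (2:ℝ) = 7 ^ 2 := by exact_mod_cast ENNReal.rpow_natCast 7 2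
      rw [h3, h7]; norm_num
    rw [ENNReal.inv_rpow]
    exact ENNReal.div_le_of_le_mul (by simpa using this)
  have hm : μH[(2 / 3 : ℝ)] K ≤ Metric.ediam K ^ (2 / 3 : ℝ) := by
    have := Measure.hausdorffMeasure_le_liminf_sum (ι := fun n : ℕ => (Fin n → Fin 3)) (2 / 3 : ℝ) K
      (l := atTop) (fun n => (7⁻¹ : ℝ≥0∞) ^ n * Metric.ediam K) ?_
      (fun n w => Sw1 a (List.ofFn w) '' K) (Eventually.of_forall hdi)
      (Eventually.of_forall fun n x hx => mem_iUnion.2 (cover hK n x hx))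
    · refine this.trans ?_
      refine (liminf_le_liminf (v := fun _ => Metric.ediam K ^ (2 / 3 : ℝ))
        (Eventually.of_forall fun n => ?_)).trans (by simp)
      calc ∑ w : Fin n → Fin 3, Metric.ediam (Sw1 a (List.ofFn w) '' K) ^ (2 / 3 : ℝ)
          ≤ ∑ w : Fin n → Fin 3, ((7⁻¹ : ℝ≥0∞) ^ n * Metric.ediam K) ^ (2 / 3 : ℝ) :=
            Finset.sum_le_sum fun w _ => ENNReal.rpow_le_rpow (hdi n w) (by norm_num)
        _ = (3 * (7⁻¹ : ℝ≥0∞) ^ (2 / 3 : ℝ)) ^ n * Metric.ediam K ^ (2 / 3 : ℝ) := by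
            rw [Finset.sum_const, ENNReal.mul_rpow_of_nonneg _ _ (by norm_num), mul_pow,
              ← ENNReal.rpow_natCast, ← ENNReal.rpow_natCast (7⁻¹ ^ (2 / 3 : ℝ)),
              ← ENNReal.rpow_mul, ← ENNReal.rpow_mul, mul_comm (n : ℝ)]
            simp [mul_assoc]
        _ ≤ 1 * Metric.ediam K ^ (2 / 3 : ℝ) := by
            gcongr
            exact pow_le_one₀ (by simp) h3
        _ = _ := one_mul _
    · have := ENNReal.Tendsto.mul_const (b := Metric.ediam K)
        (ENNReal.tendsto_pow_atTop_nhds_zero_of_lt_one (r := 7⁻¹) (by simp))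
        (Or.inr hD)
      simpa using this
  have hle : dimH K ≤ ((2 / 3 : NNReal) : ℝ≥0∞) := by
    apply dimH_le_of_hausdorffMeasure_ne_top
    have : ((2 / 3 : NNReal) : ℝ) = 2 / 3 := by simp
    rw [this]
    exact ne_top_of_le_ne_top (ENNReal.rpow_ne_top_of_nonneg (by norm_num) hD) hm
  refine hle.trans_lt ?_
  have : (2 / 3 : NNReal) < 1 := by
    rw [← NNReal.coe_lt_coe]; norm_num
  exact_mod_cast this

/-- Coding map of the sub-Cantor set. -/
noncomputable def ph (e : ℕ → Fin 2) : ℝ :=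
  Real.ofDigits (fun n => if e n = 0 then (0 : Fin 7) else 6)

lemma ph_bd (e : ℕ → Fin 2) : 0 ≤ ph e ∧ ph e ≤ 1 :=
  ⟨Real.ofDigits_nonneg _, Real.ofDigits_le_one _⟩

lemma ph_rec (e : ℕ → Fin 2) :
    ph e = ph (fun n => e (n + 1)) / 7 + (if e 0 = 0 then 0 else 6 / 7) := by
  rw [ph, Real.ofDigits_eq_sum_add_ofDigits _ 1]
  simp only [Finset.sum_range_one, Real.ofDigitsTerm, ph]
  split_ifs <;> norm_num <;> ring

lemma ps_rec (e : ℕ → Fin 2) :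
    Real.ofDigits e = Real.ofDigits (fun n => e (n + 1)) / 2 + (if e 0 = 0 then 0 else 1 / 2) := by
  rw [Real.ofDigits_eq_sum_add_ofDigits _ 1]
  simp only [Finset.sum_range_one, Real.ofDigitsTerm]
  have : e 0 = 0 ∨ e 0 = 1 := by omega
  rcases this with h | h <;> simp [h] <;> ring

lemma holder_aux (n : ℕ) : ∀ e f : ℕ → Fin 2,
    |Real.ofDigits e - Real.ofDigits f| ^ 3 ≤ 7 / 5 * |ph e - ph f| + (1 / 8) ^ n := by
  have hb : ∀ e f : ℕ → Fin 2, |Real.ofDigits e - Real.ofDigits f| ^ 3 ≤ 1 := by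
    intro e f
    refine pow_le_one₀ (abs_nonneg _) ?_
    rw [abs_le]
    constructor <;>
    linarith [Real.ofDigits_nonneg e, Real.ofDigits_nonneg f, Real.ofDigits_le_one e,
      Real.ofDigits_le_one f]
  induction n with
  | zero => intro e f; have := hb e f; have := abs_nonneg (ph e - ph f); norm_num; linarith
  | succ n ih =>
    intro e f
    by_cases h : e 0 = f 0
    · have i1 := ih (fun n => e (n + 1)) (fun n => f (n + 1))
      have e1 : Real.ofDigits e - Real.ofDigits f = (1 / 2) *
          (Real.ofDigits (fun n => e (n + 1)) - Real.ofDigits (fun n => f (n + 1))) := by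
        rw [ps_rec e, ps_rec f, h]; ring
      have e2 : ph e - ph f = (1 / 7) * (ph (fun n => e (n + 1)) - ph (fun n => f (n + 1))) := by
        rw [ph_rec e, ph_rec f, h]; ring
      rw [e1, e2, abs_mul, abs_mul, mul_pow, abs_of_nonneg (by norm_num : (0:ℝ) ≤ 1 / 2),
        abs_of_nonneg (by norm_num : (0:ℝ) ≤ 1 / 7), pow_succ (1 / 8 : ℝ) n]
      have := abs_nonneg (ph (fun n => e (n + 1)) - ph (fun n => f (n + 1)))
      linarith
    · have h5 : 5 / 7 ≤ |ph e - ph f| := by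
        rw [ph_rec e, ph_rec f]
        have b1 := ph_bd (fun n => e (n + 1))
        have b2 := ph_bd (fun n => f (n + 1))
        rw [le_abs]
        by_cases he : e 0 = 0
        · have hf : f 0 ≠ 0 := fun hf => h (he.trans hf.symm)
          right; rw [if_pos he, if_neg hf]; linarith
        · have hf : f 0 = 0 := by omega
          left; rw [if_neg he, if_pos hf]; linarith
      have := hb e f
      have : (0:ℝ) < (1 / 8) ^ (n + 1) := by positivity
      linarith

lemma holder_main (e f : ℕ → Fin 2) :
    |Real.ofDigits e - Real.ofDigits f| ^ 3 ≤ 7 / 5 * |ph e - ph f| := by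
  have ht : Filter.Tendsto (fun n : ℕ => 7 / 5 * |ph e - ph f| + (1 / 8 : ℝ) ^ n) Filter.atTop
      (nhds (7 / 5 * |ph e - ph f| + 0)) :=
    tendsto_const_nhds.add (tendsto_pow_atTop_nhds_zero_of_lt_one (by norm_num) (by norm_num))
  rw [add_zero] at ht
  exact ge_of_tendsto' ht (fun n => holder_aux n e f)

lemma ph_mem {a : ℝ} {K : Set ℝ} (hne : K.Nonempty) (hc : IsCompact K)
    (hK : K = ⋃ i, S1 a i '' K) (e : ℕ → Fin 2) : ph e ∈ K := by
  obtain ⟨x0, hx0⟩ := hne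
  have hS : ∀ i, ∀ x ∈ K, S1 a i x ∈ K := fun i x hx => by
    rw [hK]; exact mem_iUnion.2 ⟨i, x, hx, rfl⟩
  have key : ∀ n : ℕ, ∀ e : ℕ → Fin 2, ∃ x ∈ K, |x - ph e| ≤ (|x0| + 1) * (1 / 7) ^ n := by
    intro n
    induction n with
    | zero =>
      intro e
      refine ⟨x0, hx0, ?_⟩
      have := ph_bd e
      have h1 := abs_sub x0 (ph e)
      rw [abs_of_nonneg this.1] at h1
      norm_num; linarith
    | succ n ih =>
      intro e
      obtain ⟨x, hx, h⟩ := ih (fun n => e (n + 1))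
      refine ⟨S1 a (if e 0 = 0 then 0 else 2) x, hS _ x hx, ?_⟩
      have : S1 a (if e 0 = 0 then 0 else 2) x - ph e =
          (1 / 7) * (x - ph (fun n => e (n + 1))) := by
        rw [ph_rec e, S1_eq]
        split_ifs <;> simp [dg] <;> ring
      rw [this, abs_mul, abs_of_nonneg (by norm_num : (0:ℝ) ≤ 1 / 7), pow_succ]
      linarith
  choose x hx h using fun n => key n e
  refine hc.isClosed.mem_of_tendsto (f := x) (b := Filter.atTop) ?_ (Filter.Eventually.of_forall hx)
  rw [tendsto_iff_dist_tendsto_zero]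
  have ht : Filter.Tendsto (fun n : ℕ => (|x0| + 1) * (1 / 7 : ℝ) ^ n) Filter.atTop
      (nhds ((|x0| + 1) * 0)) :=
    tendsto_const_nhds.mul (tendsto_pow_atTop_nhds_zero_of_lt_one (by norm_num) (by norm_num))
  rw [mul_zero] at ht
  exact squeeze_zero (fun _ => dist_nonneg) (fun n => h n) ht

lemma dim_lower {a : ℝ} {K : Set ℝ} (hne : K.Nonempty) (hc : IsCompact K)
    (hK : K = ⋃ i, S1 a i '' K) : 0 < dimH K := by
  have hsub : Set.range ph ⊆ K := by
    rintro _ ⟨e, rfl⟩; exact ph_mem hne hc hK e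
  refine lt_of_lt_of_le ?_ (dimH_mono hsub)
  let g : ℝ → ℝ := fun x => Real.ofDigits (Function.invFun ph x)
  have hg : HolderOnWith 2 (1 / 3) g (Set.range ph) := by
    intro x hx y hy
    have ex : ph (Function.invFun ph x) = x := Function.invFun_eq hx
    have ey : ph (Function.invFun ph y) = y := Function.invFun_eq hy
    have h := holder_main (Function.invFun ph x) (Function.invFun ph y)
    rw [ex, ey] at h
    have h2 : dist (g x) (g y) ≤ 2 * dist x y ^ (1 / 3 : ℝ) := by
      rw [Real.dist_eq, Real.dist_eq]
      refine le_of_pow_le_pow_left₀ (n := 3) (by norm_num) (by positivity) ?_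
      rw [mul_pow, ← Real.rpow_natCast (|x - y| ^ (1 / 3 : ℝ)), ← Real.rpow_mul (abs_nonneg _)]
      norm_num
      refine h.trans ?_
      have := abs_nonneg (x - y)
      linarith
    rw [edist_dist, edist_dist, ENNReal.ofReal_rpow_of_nonneg dist_nonneg (by positivity)]
    have : ((2 : NNReal) : ENNReal) = ENNReal.ofReal 2 := by simp
    rw [this, ← ENNReal.ofReal_mul (by norm_num)]
    refine ENNReal.ofReal_le_ofReal (h2.trans_eq ?_)
    norm_num
  have hle := hg.dimH_image_le (by norm_num)
  have himg : Set.Icc 0 1 ⊆ g '' Set.range ph := by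
    intro y hy
    obtain ⟨e, -, rfl⟩ := Real.ofDigits_SurjOn (b := 2) (by norm_num) hy
    refine ⟨ph e, ⟨e, rfl⟩, ?_⟩
    have ex : ph (Function.invFun ph (ph e)) = ph e := Function.invFun_eq ⟨e, rfl⟩
    have h := holder_main (Function.invFun ph (ph e)) e
    rw [ex, sub_self, abs_zero, mul_zero] at h
    have h0 : |Real.ofDigits (Function.invFun ph (ph e)) - Real.ofDigits e| ^ 3 = 0 :=
      le_antisymm h (by positivity)
    exact sub_eq_zero.1 (abs_eq_zero.1 (pow_eq_zero_iff (by norm_num) |>.1 h0))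
  have hone : dimH (Set.Icc (0:ℝ) 1) = 1 := by
    rw [Real.dimH_of_nonempty_interior (by simp)]; simp
  have h1 := (dimH_mono himg).trans hle
  rw [hone] at h1
  by_contra hcon
  have hz : dimH (Set.range ph) = 0 := by simpa using hcon
  rw [hz] at h1
  simp at h1

theorem stmt2 : ∃ a ∈ Ioo (0 : ℝ) (1 / 7),
    WSP1 a ∧ ¬ FTCco1 a ∧
    ∀ K : Set ℝ, K.Nonempty → IsCompact K → K = ⋃ i, S1 a i '' K →
      0 < dimH K ∧ dimH K < 1 := by
  obtain ⟨δ, v, rfl, hanti, h0, h1, hv⟩ := exists_v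
  have hd := h0 0
  have hd1 := h1 0
  refine ⟨(1 - v 0) / 7, ⟨by linarith, by linarith⟩, wsp_of h0 h1 hv,
    not_ftc v hanti h0 (fun k => (h1 k).trans (by norm_num)) (reach hv),
    fun K hne hc hK => ⟨dim_lower hne hc hK, dim_upper hc hK⟩⟩
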